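/- arXiv:1003.3366 — 2 statements merged into one kernel-verified Lean document; each statement's English description precedes it below -/
import Mathlib

section
/- Let g ∈ C^∞(ℝ²) ∩ L^∞(ℝ²) and let u : [0,1] × [0,T] → ℝ be a smooth solution of the graph equation u_t = u_xx/(1 + u_x²) + g(x, u) √(1 + u_x²) with periodic-type boundary conditions. Then there exists a constant C > 0, depending only on ‖g‖_∞, such that for every t ∈ (0,T): d/dt ∫₀¹ (1 + u_x(x,t)²)^{3/2} dx ≤ C + C (∫₀¹ (1 + u_x(x,t)²)^{3/2} dx)³. -/
open Real MeasureTheory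

noncomputable section

/-- partial derivative in the first (space) variable -/
def pdx (f : ℝ → ℝ → ℝ) : ℝ → ℝ → ℝ := fun x t => deriv (fun x' => f x' t) x

/-- partial derivative in the second (time) variable -/
def pdt (f : ℝ → ℝ → ℝ) : ℝ → ℝ → ℝ := fun x t => deriv (fun t' => f x t') t

/-- `u` is a smooth solution on `[0,1] × [0,T]` of the graph equation
`u_t = u_xx/(1+u_x²) + g(x,u)√(1+u_x²)` with periodic-type boundary conditions. -/
def IsGraphSol (g : ℝ → ℝ → ℝ) (T : ℝ) (u : ℝ → ℝ → ℝ) : Prop :=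
  ContDiff ℝ (⊤ : ℕ∞) (fun p : ℝ × ℝ => u p.1 p.2) ∧
  (∀ x ∈ Set.Icc (0:ℝ) 1, ∀ t ∈ Set.Icc 0 T,
    pdt u x t = pdx (pdx u) x t / (1 + (pdx u x t) ^ 2)
      + g x (u x t) * Real.sqrt (1 + (pdx u x t) ^ 2)) ∧
  (∀ t ∈ Set.Icc 0 T,
    u 0 t - u 0 0 = u 1 t - u 1 0 ∧ pdx u 0 t = pdx u 1 t)

/-!
Write `v = √(1 + u_x²)` and `I = ∫ v³`. Differentiating under the integral and integrating by parts
(the boundary terms cancel by periodicity) gives `I' = -3 ∫ (1 + 2 u_x²) v⁻¹ u_xx u_t`. Inserting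
the equation, the diffusion term contributes at most `-3 A`, where `A = ∫ u_xx² / v`, and Young's
inequality spends half of this on the forcing term, so that `I' ≤ -(3/2) A + 3 M² ∫ v⁵`.
It remains to interpolate `∫ v⁵ ≤ (sup v²) I`: the oscillation of `v² = 1 + u_x²` is at most
`∫ |2 u_x u_xx| ≤ 2 ∫ v^(3/2) · |u_xx| v^(-1/2)`, which Young's inequality splits into a small
multiple of `A`, absorbed by the dissipation, and a multiple of `I`.
-/

open Set Topology

section Interval

variable {E : Type*} [NormedAddCommGroup E] [NormedSpace ℝ E] {a b : ℝ}

lemma norm_sub_le_integral_of_norm_deriv_le_of_mem_Icc {f : ℝ → E} {B : ℝ → ℝ} {x y : ℝ}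
    (hfc : ContinuousOn f (Icc a b)) (hfd : DifferentiableOn ℝ f (Ioo a b))
    (hfB : ∀ z ∈ Ioo a b, ‖deriv f z‖ ≤ B z) (hB : IntervalIntegrable B volume a b)
    (hx : x ∈ Icc a b) (hy : y ∈ Icc a b) :
    ‖f x - f y‖ ≤ ∫ z in a..b, B z := by
  wlog hyx : y ≤ x generalizing x y
  · rw [norm_sub_rev]
    exact this hy hx (le_of_not_ge hyx)
  have hB_nonneg : 0 ≤ᵐ[volume.restrict (Ioc a b)] B := by
    rw [← Measure.restrict_congr_set Ioo_ae_eq_Ioc]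
    exact ae_restrict_of_forall_mem measurableSet_Ioo fun z hz => (norm_nonneg _).trans (hfB z hz)
  have hsub : Ioo y x ⊆ Ioo a b := Ioo_subset_Ioo hy.1 hx.2
  calc ‖f x - f y‖ ≤ ∫ z in y..x, B z :=
        norm_sub_le_integral_of_norm_deriv_le_of_le hyx (hfc.mono (Icc_subset_Icc hy.1 hx.2))
          (hfd.mono hsub) (.of_forall fun z hz => hfB z (hsub hz))
          (hB.mono_set (uIcc_subset_uIcc (Icc_subset_uIcc hy) (Icc_subset_uIcc hx)))
    _ ≤ ∫ z in a..b, B z := intervalIntegral.integral_mono_interval hy.1 hyx hx.2 hB_nonneg hB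

lemma le_interval_average_add_integral_of_abs_deriv_le {f B : ℝ → ℝ} {x : ℝ} (hab : a < b)
    (hfc : ContinuousOn f (Icc a b)) (hfd : DifferentiableOn ℝ f (Ioo a b))
    (hfB : ∀ z ∈ Ioo a b, |deriv f z| ≤ B z) (hB : IntervalIntegrable B volume a b)
    (hx : x ∈ Icc a b) :
    f x ≤ (⨍ y in a..b, f y) + ∫ z in a..b, B z := by
  obtain ⟨c, hc, hfc_avg⟩ := exists_eq_interval_average hab.ne ((uIcc_of_le hab.le).symm ▸ hfc)
  rw [uIoo_of_lt hab] at hc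
  have hosc : |f x - f c| ≤ ∫ z in a..b, B z :=
    norm_sub_le_integral_of_norm_deriv_le_of_mem_Icc hfc hfd hfB hB hx (Ioo_subset_Icc_self hc)
  rw [← hfc_avg]
  linarith [le_abs_self (f x - f c)]

lemma hasDerivAt_intervalIntegral_of_continuous {F F' : ℝ → ℝ → E} {t : ℝ}
    (hF : ∀ s, Continuous fun x => F x s) (hF' : Continuous fun z : ℝ × ℝ => F' z.1 z.2)
    (hderiv : ∀ x s, HasDerivAt (F x) (F' x s) s) :
    HasDerivAt (fun s => ∫ x in a..b, F x s) (∫ x in a..b, F' x t) t := by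
  obtain ⟨K, hK⟩ := (isCompact_uIcc.prod (isCompact_Icc (a := t - 1) (b := t + 1))
    ).exists_bound_of_continuousOn (s := uIcc a b ×ˢ Icc (t - 1) (t + 1)) hF'.continuousOn
  have hF'_slice : Continuous fun x => F' x t := hF'.comp (by fun_prop : Continuous fun x => (x, t))
  exact (intervalIntegral.hasDerivAt_integral_of_dominated_loc_of_deriv_le
    (F := fun s x => F x s) (F' := fun s x => F' x s) (bound := fun _ => K)
    (Icc_mem_nhds (by linarith) (by linarith))
    (.of_forall fun s => (hF s).aestronglyMeasurable) ((hF t).intervalIntegrable _ _)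
    hF'_slice.aestronglyMeasurable
    (.of_forall fun x hx s hs => hK (x, s) ⟨uIoc_subset_uIcc hx, hs⟩) (by simp)
    (.of_forall fun x _ s _ => hderiv x s)).2

end Interval

section LineElement

/-- The length element `v = √(1 + s²)` of a graph with slope `s`. -/
def lineElement (s : ℝ) : ℝ := √(1 + s ^ 2)

lemma lineElement_sq (s : ℝ) : lineElement s ^ 2 = 1 + s ^ 2 := sq_sqrt (by positivity)

lemma one_le_lineElement (s : ℝ) : 1 ≤ lineElement s :=
  one_le_sqrt.2 (le_add_of_nonneg_right (sq_nonneg s))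

lemma lineElement_pos (s : ℝ) : 0 < lineElement s := one_pos.trans_le (one_le_lineElement s)

@[simp]
lemma lineElement_ne_zero (s : ℝ) : lineElement s ≠ 0 := (lineElement_pos s).ne'

lemma abs_le_lineElement (s : ℝ) : |s| ≤ lineElement s :=
  abs_le_sqrt (le_add_of_nonneg_left zero_le_one)

@[fun_prop]
lemma continuous_lineElement : Continuous lineElement := by
  unfold lineElement
  fun_prop

lemma hasDerivAt_lineElement (s : ℝ) : HasDerivAt lineElement (s / lineElement s) s := by
  have h := ((hasDerivAt_pow 2 s).const_add 1).sqrt (by positivity)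
  refine h.congr_deriv ?_
  rw [← lineElement]
  have := lineElement_ne_zero s
  field_simp
  simp

lemma hasDerivAt_lineElement_pow_three (s : ℝ) :
    HasDerivAt (fun s => lineElement s ^ 3) (3 * (s * lineElement s)) s := by
  refine ((hasDerivAt_lineElement s).fun_pow 3).congr_deriv ?_
  have := lineElement_ne_zero s
  push_cast
  field_simp

lemma hasDerivAt_mul_lineElement (s : ℝ) :
    HasDerivAt (fun s => s * lineElement s) ((1 + 2 * s ^ 2) / lineElement s) s := by
  refine ((hasDerivAt_id' s).fun_mul (hasDerivAt_lineElement s)).congr_deriv ?_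
  have := lineElement_ne_zero s
  field_simp
  rw [lineElement_sq]
  ring

end LineElement

section Pointwise

lemma neg_mul_div_le_of_abs_sub_le {v w q M : ℝ} (hv : 0 < v) (hq : |q - w / v ^ 2| ≤ M * v) :
    -(w * q / v) ≤ -(w ^ 2 / v ^ 3) / 2 + M ^ 2 * v ^ 3 / 2 := by
  obtain ⟨r, rfl⟩ : ∃ r, q = r + w / v ^ 2 := ⟨q - w / v ^ 2, by ring⟩
  rw [add_sub_cancel_right] at hq
  have hr : r ^ 2 * v ≤ M ^ 2 * v ^ 3 :=
    calc r ^ 2 * v ≤ (M * v) ^ 2 * v :=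
          mul_le_mul_of_nonneg_right (sq_le_sq.2 (hq.trans (le_abs_self _))) hv.le
      _ = M ^ 2 * v ^ 3 := by ring
  have hsquare : -(w * (r + w / v ^ 2) / v)
      = -(w ^ 2 / v ^ 3) / 2 + r ^ 2 * v / 2 - (w / v ^ 2 + r) ^ 2 * v / 2 := by
    field_simp
    ring
  have : 0 ≤ (w / v ^ 2 + r) ^ 2 * v := by positivity
  linarith

lemma neg_three_mul_flux_mul_le {s w q M : ℝ}
    (hq : |q - w / (1 + s ^ 2)| ≤ M * lineElement s) :
    -(3 * ((1 + 2 * s ^ 2) / lineElement s * w) * q) ≤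
      -(3 / 2) * (w ^ 2 / lineElement s) + 3 * M ^ 2 * lineElement s ^ 5 := by
  have hv := lineElement_pos s
  have hv2 := lineElement_sq s
  rw [← hv2] at hq
  set v := lineElement s
  have hlower : v ^ 2 * (w ^ 2 / v ^ 3) ≤ (1 + 2 * s ^ 2) * (w ^ 2 / v ^ 3) := by
    gcongr
    linarith [sq_nonneg s]
  have hupper : (1 + 2 * s ^ 2) * (M ^ 2 * v ^ 3) ≤ 2 * v ^ 2 * (M ^ 2 * v ^ 3) := by
    gcongr
    linarith
  have hdiss : v ^ 2 * (w ^ 2 / v ^ 3) = w ^ 2 / v := by field_simp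
  calc -(3 * ((1 + 2 * s ^ 2) / v * w) * q)
      = 3 * (1 + 2 * s ^ 2) * -(w * q / v) := by ring
    _ ≤ 3 * (1 + 2 * s ^ 2) * (-(w ^ 2 / v ^ 3) / 2 + M ^ 2 * v ^ 3 / 2) := by
        gcongr
        exact neg_mul_div_le_of_abs_sub_le hv hq
    _ ≤ -(3 / 2) * (w ^ 2 / v) + 3 * M ^ 2 * v ^ 5 := by linarith

lemma mul_abs_two_mul_mul_le {c : ℝ} (hc : 0 ≤ c) (s w : ℝ) :
    c * |2 * s * w| ≤ w ^ 2 / lineElement s / 2 + 2 * c ^ 2 * lineElement s ^ 3 := by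
  have hv := lineElement_pos s
  have hs := abs_le_lineElement s
  set v := lineElement s
  have hsquare : w ^ 2 / v / 2 + 2 * c ^ 2 * v ^ 3 - c * (2 * v * |w|)
      = (|w| - 2 * c * v ^ 2) ^ 2 / (2 * v) := by
    rw [← sq_abs w]
    field_simp
    ring
  have : 0 ≤ (|w| - 2 * c * v ^ 2) ^ 2 / (2 * v) := by positivity
  calc c * |2 * s * w| = c * (2 * |s| * |w|) := by rw [abs_mul, abs_mul, abs_two]
    _ ≤ c * (2 * v * |w|) := by gcongr
    _ ≤ w ^ 2 / v / 2 + 2 * c ^ 2 * v ^ 3 := by linarith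

end Pointwise

section SlopeEnergy

variable {a b : ℝ} {p q : ℝ → ℝ}

/-- The energy `I = ∫ v³` over `[a, b]` of a graph with slope function `p`. -/
def slopeEnergy (a b : ℝ) (p : ℝ → ℝ) : ℝ := ∫ x in a..b, lineElement (p x) ^ 3

/-- The dissipation `A = ∫ p'² / v` over `[a, b]` of a graph with slope function `p`. -/
def slopeDissipation (a b : ℝ) (p : ℝ → ℝ) : ℝ := ∫ x in a..b, deriv p x ^ 2 / lineElement (p x)

lemma sub_le_slopeEnergy (hab : a ≤ b) (hp : Continuous p) : b - a ≤ slopeEnergy a b p :=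
  calc b - a = ∫ _ in a..b, (1 : ℝ) := by simp
    _ ≤ slopeEnergy a b p :=
        intervalIntegral.integral_mono_on hab (by simp)
          (Continuous.intervalIntegrable (by fun_prop) _ _)
          fun x _ => one_le_pow₀ (one_le_lineElement (p x))

lemma slopeEnergy_nonneg (hab : a ≤ b) : 0 ≤ slopeEnergy a b p :=
  intervalIntegral.integral_nonneg hab fun x _ => pow_nonneg (lineElement_pos (p x)).le 3

lemma interval_average_lineElement_sq_le (hab : a < b) (hp : Continuous p) :
    ⨍ x in a..b, lineElement (p x) ^ 2 ≤ slopeEnergy a b p / (b - a) := by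
  rw [interval_average_eq_div]
  have : 0 < b - a := sub_pos.2 hab
  gcongr
  exact intervalIntegral.integral_mono_on hab.le
    (Continuous.intervalIntegrable (by fun_prop) _ _)
    (Continuous.intervalIntegrable (by fun_prop) _ _)
    fun x _ => pow_le_pow_right₀ (one_le_lineElement (p x)) (by norm_num)

lemma mul_lineElement_sq_le (hab : a < b) (hp : ContDiff ℝ 1 p) {c : ℝ} (hc : 0 ≤ c) {x : ℝ}
    (hx : x ∈ Icc a b) :
    c * lineElement (p x) ^ 2 ≤ c * (slopeEnergy a b p / (b - a))
      + (slopeDissipation a b p / 2 + 2 * c ^ 2 * slopeEnergy a b p) := by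
  have hpc := hp.continuous
  have := hp.continuous_deriv le_rfl
  have hderiv (z : ℝ) : HasDerivAt (fun z => c * lineElement (p z) ^ 2)
      (c * (2 * p z * deriv p z)) z := by
    simp only [lineElement_sq]
    simpa using (((hp.differentiable one_ne_zero z).hasDerivAt.fun_pow 2).const_add 1).const_mul c
  have hbound (z : ℝ) : |deriv (fun z => c * lineElement (p z) ^ 2) z| ≤
      deriv p z ^ 2 / lineElement (p z) / 2 + 2 * c ^ 2 * lineElement (p z) ^ 3 := by
    rw [(hderiv z).deriv, abs_mul, abs_of_nonneg hc]
    exact mul_abs_two_mul_mul_le hc (p z) (deriv p z)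
  have hsup := le_interval_average_add_integral_of_abs_deriv_le hab (by fun_prop)
    (fun z _ => (hderiv z).differentiableAt.differentiableWithinAt) (fun z _ => hbound z)
    (Continuous.intervalIntegrable (by fun_prop (disch := simp)) _ _) hx
  have havg : ⨍ z in a..b, c * lineElement (p z) ^ 2 = c * ⨍ z in a..b, lineElement (p z) ^ 2 := by
    simp only [interval_average_eq_div, intervalIntegral.integral_const_mul, mul_div_assoc]
  have hint : ∫ z in a..b,
      (deriv p z ^ 2 / lineElement (p z) / 2 + 2 * c ^ 2 * lineElement (p z) ^ 3) =
        slopeDissipation a b p / 2 + 2 * c ^ 2 * slopeEnergy a b p := by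
    rw [intervalIntegral.integral_add
        (Continuous.intervalIntegrable (by fun_prop (disch := simp)) _ _)
        (Continuous.intervalIntegrable (by fun_prop) _ _),
      intervalIntegral.integral_div, intervalIntegral.integral_const_mul,
      slopeDissipation, slopeEnergy]
  rw [havg, hint] at hsup
  refine hsup.trans ?_
  gcongr
  exact interval_average_lineElement_sq_le hab hpc

lemma mul_integral_lineElement_pow_five_le (hab : a < b) (hp : ContDiff ℝ 1 p) {c : ℝ}
    (hc : 0 ≤ c) :
    c * ∫ x in a..b, lineElement (p x) ^ 5 ≤ slopeDissipation a b p / 2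
      + c * slopeEnergy a b p ^ 2 / (b - a) + 2 * c ^ 2 * slopeEnergy a b p ^ 3 := by
  have hpc := hp.continuous
  obtain ⟨x₀, hx₀, hmax⟩ := isCompact_Icc.exists_isMaxOn (nonempty_Icc.2 hab.le)
    (f := fun x => lineElement (p x) ^ 2) (by fun_prop)
  have hI : 0 ≤ slopeEnergy a b p := slopeEnergy_nonneg hab.le
  have hsup : ∫ x in a..b, lineElement (p x) ^ 5 ≤
      lineElement (p x₀) ^ 2 * slopeEnergy a b p := by
    rw [slopeEnergy, ← intervalIntegral.integral_const_mul]
    refine intervalIntegral.integral_mono_on hab.le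
      (Continuous.intervalIntegrable (by fun_prop) _ _)
      (Continuous.intervalIntegrable (by fun_prop) _ _) fun x hx => ?_
    calc lineElement (p x) ^ 5 = lineElement (p x) ^ 2 * lineElement (p x) ^ 3 := by ring
      _ ≤ lineElement (p x₀) ^ 2 * lineElement (p x) ^ 3 :=
          mul_le_mul_of_nonneg_right (hmax hx) (pow_nonneg (lineElement_pos _).le 3)
  -- Taking the weight `c * I` instead of `c` makes the coefficient of the dissipation absolute.
  calc c * ∫ x in a..b, lineElement (p x) ^ 5
      ≤ c * (lineElement (p x₀) ^ 2 * slopeEnergy a b p) := by gcongr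
    _ = c * slopeEnergy a b p * lineElement (p x₀) ^ 2 := by ring
    _ ≤ c * slopeEnergy a b p * (slopeEnergy a b p / (b - a)) + (slopeDissipation a b p / 2
          + 2 * (c * slopeEnergy a b p) ^ 2 * slopeEnergy a b p) :=
        mul_lineElement_sq_le hab hp (mul_nonneg hc hI) hx₀
    _ = slopeDissipation a b p / 2 + c * slopeEnergy a b p ^ 2 / (b - a)
          + 2 * c ^ 2 * slopeEnergy a b p ^ 3 := by ring

lemma integral_mul_lineElement_mul_deriv (hp : ContDiff ℝ 1 p) (hq : ContDiff ℝ 1 q)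
    (hpab : p a = p b) (hqab : q a = q b) :
    ∫ x in a..b, 3 * (p x * lineElement (p x)) * deriv q x =
      ∫ x in a..b, -(3 * ((1 + 2 * p x ^ 2) / lineElement (p x) * deriv p x) * q x) := by
  have hpc := hp.continuous
  have := hp.continuous_deriv le_rfl
  rw [intervalIntegral.integral_mul_deriv_eq_deriv_mul
    (u := fun x => 3 * (p x * lineElement (p x)))
    (fun x _ => ((hasDerivAt_mul_lineElement (p x)).comp x
      (hp.differentiable one_ne_zero x).hasDerivAt).const_mul 3)
    (fun x _ => (hq.differentiable one_ne_zero x).hasDerivAt)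
    (Continuous.intervalIntegrable (by fun_prop (disch := simp)) _ _)
    ((hq.continuous_deriv le_rfl).intervalIntegrable _ _)]
  simp only [hpab, hqab, sub_self, zero_sub, intervalIntegral.integral_neg]

lemma integral_mul_lineElement_mul_deriv_le (hab : a < b) (hp : ContDiff ℝ 1 p)
    (hq : ContDiff ℝ 1 q) (hpab : p a = p b) (hqab : q a = q b) {M : ℝ}
    (hpq : ∀ x ∈ Icc a b, |q x - deriv p x / (1 + p x ^ 2)| ≤ M * lineElement (p x)) :
    ∫ x in a..b, 3 * (p x * lineElement (p x)) * deriv q x ≤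
      (3 * M ^ 2 / (b - a) ^ 2 + 6 * M ^ 4) * slopeEnergy a b p ^ 3 := by
  have hpc := hp.continuous
  have hqc := hq.continuous
  have := hp.continuous_deriv le_rfl
  have henergy : ∫ x in a..b, 3 * (p x * lineElement (p x)) * deriv q x ≤
      -(3 / 2) * slopeDissipation a b p + 3 * M ^ 2 * ∫ x in a..b, lineElement (p x) ^ 5 := by
    rw [integral_mul_lineElement_mul_deriv hp hq hpab hqab, slopeDissipation,
      ← intervalIntegral.integral_const_mul, ← intervalIntegral.integral_const_mul,
      ← intervalIntegral.integral_add
        (Continuous.intervalIntegrable (by fun_prop (disch := simp)) _ _)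
        (Continuous.intervalIntegrable (by fun_prop) _ _)]
    exact intervalIntegral.integral_mono_on hab.le
      (Continuous.intervalIntegrable (by fun_prop (disch := simp)) _ _)
      (Continuous.intervalIntegrable (by fun_prop (disch := simp)) _ _)
      fun x hx => neg_three_mul_flux_mul_le (hpq x hx)
  have hinterp := mul_integral_lineElement_pow_five_le hab hp (sq_nonneg M)
  have hba : 0 < b - a := sub_pos.2 hab
  have hsq : M ^ 2 * slopeEnergy a b p ^ 2 / (b - a) ≤
      M ^ 2 / (b - a) ^ 2 * slopeEnergy a b p ^ 3 :=
    calc M ^ 2 * slopeEnergy a b p ^ 2 / (b - a)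
        = M ^ 2 / (b - a) ^ 2 * slopeEnergy a b p ^ 2 * (b - a) := by field_simp
      _ ≤ M ^ 2 / (b - a) ^ 2 * slopeEnergy a b p ^ 2 * slopeEnergy a b p := by
          gcongr
          exact sub_le_slopeEnergy hab.le hpc
      _ = M ^ 2 / (b - a) ^ 2 * slopeEnergy a b p ^ 3 := by ring
  linear_combination henergy + 3 * hinterp + 3 * hsq

end SlopeEnergy

section PartialDerivatives

variable {f : ℝ → ℝ → ℝ} {n : WithTop ℕ∞}

lemma pdx_eq_fderiv (hf : Differentiable ℝ fun z : ℝ × ℝ => f z.1 z.2) (x t : ℝ) :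
    pdx f x t = fderiv ℝ (fun z : ℝ × ℝ => f z.1 z.2) (x, t) (1, 0) :=
  ((hf (x, t)).hasFDerivAt.comp_hasDerivAt (f := fun y => (y, t)) x
    ((hasDerivAt_id x).prodMk (hasDerivAt_const x t))).deriv

lemma pdt_eq_fderiv (hf : Differentiable ℝ fun z : ℝ × ℝ => f z.1 z.2) (x t : ℝ) :
    pdt f x t = fderiv ℝ (fun z : ℝ × ℝ => f z.1 z.2) (x, t) (0, 1) :=
  ((hf (x, t)).hasFDerivAt.comp_hasDerivAt (f := fun s => (x, s)) t
    ((hasDerivAt_const t x).prodMk (hasDerivAt_id t))).deriv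

lemma contDiff_pdx (hf : ContDiff ℝ (n + 1) fun z : ℝ × ℝ => f z.1 z.2) :
    ContDiff ℝ n fun z : ℝ × ℝ => pdx f z.1 z.2 := by
  simp only [pdx_eq_fderiv (hf.differentiable (by simp))]
  exact (hf.fderiv_right le_rfl).clm_apply contDiff_const

lemma contDiff_pdt (hf : ContDiff ℝ (n + 1) fun z : ℝ × ℝ => f z.1 z.2) :
    ContDiff ℝ n fun z : ℝ × ℝ => pdt f z.1 z.2 := by
  simp only [pdt_eq_fderiv (hf.differentiable (by simp))]
  exact (hf.fderiv_right le_rfl).clm_apply contDiff_const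

lemma pdt_pdx_comm (hf : ContDiff ℝ 2 fun z : ℝ × ℝ => f z.1 z.2) (x t : ℝ) :
    pdt (pdx f) x t = pdx (pdt f) x t := by
  have hf' : Differentiable ℝ (fderiv ℝ fun z : ℝ × ℝ => f z.1 z.2) :=
    (hf.fderiv_right (m := 1) (by norm_num)).differentiable one_ne_zero
  have hsymm := hf.contDiffAt.isSymmSndFDerivAt (x := (x, t)) (by simp)
  rw [pdt_eq_fderiv ((contDiff_pdx (n := 1) hf).differentiable one_ne_zero),
    pdx_eq_fderiv ((contDiff_pdt (n := 1) hf).differentiable one_ne_zero)]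
  simp only [pdx_eq_fderiv (hf.differentiable two_ne_zero),
    pdt_eq_fderiv (hf.differentiable two_ne_zero)]
  rw [fderiv_clm_apply (hf' _) (differentiableAt_const _),
    fderiv_clm_apply (hf' _) (differentiableAt_const _)]
  simpa using hsymm.eq (0, 1) (1, 0)

lemma hasDerivAt_slopeEnergy_pdx (hf : ContDiff ℝ 2 fun z : ℝ × ℝ => f z.1 z.2) (a b t : ℝ) :
    HasDerivAt (fun s => slopeEnergy a b fun x => pdx f x s)
      (∫ x in a..b, 3 * (pdx f x t * lineElement (pdx f x t)) * pdx (pdt f) x t) t := by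
  have hpdx := contDiff_pdx (n := 1) hf
  have hpdxc := hpdx.continuous
  have hpdx_pdt := (contDiff_pdx (n := 0) (contDiff_pdt (n := 1) hf)).continuous
  refine hasDerivAt_intervalIntegral_of_continuous (F := fun x s => lineElement (pdx f x s) ^ 3)
    (F' := fun x s => 3 * (pdx f x s * lineElement (pdx f x s)) * pdx (pdt f) x s)
    (fun s => ?_) (by fun_prop) fun x s => ?_
  · have : Continuous fun x => pdx f x s := hpdxc.comp (by fun_prop : Continuous fun x => (x, s))
    fun_prop
  · rw [← pdt_pdx_comm hf]
    have hslice : DifferentiableAt ℝ (pdx f x) s :=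
      (hpdx.comp (contDiff_prodMk_right x)).differentiable one_ne_zero s
    exact (hasDerivAt_lineElement_pow_three (pdx f x s)).comp s hslice.hasDerivAt

lemma pdt_eq_pdt_of_sub_eq_sub {a b t₀ t : ℝ}
    (h : ∀ᶠ s in 𝓝 t, f a s - f a t₀ = f b s - f b t₀) : pdt f a t = pdt f b t := by
  simpa only [pdt, deriv_sub_const_fun] using Filter.EventuallyEq.deriv_eq h

end PartialDerivatives

theorem statement13_general {g u : ℝ → ℝ → ℝ} {M a b t₀ t : ℝ} (hab : a < b)
    (hg : ∀ x y, |g x y| ≤ M) (hu : ContDiff ℝ 2 fun z : ℝ × ℝ => u z.1 z.2)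
    (hflow : ∀ x ∈ Icc a b, pdt u x t =
      pdx (pdx u) x t / (1 + pdx u x t ^ 2) + g x (u x t) * √(1 + pdx u x t ^ 2))
    (hu_bdry : ∀ᶠ s in 𝓝 t, u a s - u a t₀ = u b s - u b t₀) (hpdx_bdry : pdx u a t = pdx u b t) :
    ∃ D : ℝ, HasDerivAt (fun s => ∫ x in a..b, √(1 + pdx u x s ^ 2) ^ 3) D t ∧
      D ≤ (3 * M ^ 2 / (b - a) ^ 2 + 6 * M ^ 4) * (∫ x in a..b, √(1 + pdx u x t ^ 2) ^ 3) ^ 3 := by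
  have hslice {f : ℝ → ℝ → ℝ} (hf : ContDiff ℝ 1 fun z : ℝ × ℝ => f z.1 z.2) :
      ContDiff ℝ 1 fun x => f x t := hf.comp (contDiff_prodMk_left t)
  have hnormal_speed (x : ℝ) (hx : x ∈ Icc a b) :
      |pdt u x t - pdx (pdx u) x t / (1 + pdx u x t ^ 2)| ≤ M * lineElement (pdx u x t) := by
    rw [hflow x hx, add_sub_cancel_left, abs_mul, abs_of_nonneg (sqrt_nonneg _)]
    exact mul_le_mul_of_nonneg_right (hg _ _) (sqrt_nonneg _)
  exact ⟨_, hasDerivAt_slopeEnergy_pdx hu a b t, integral_mul_lineElement_mul_deriv_le hab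
    (hslice (contDiff_pdx hu)) (hslice (contDiff_pdt hu)) hpdx_bdry
    (pdt_eq_pdt_of_sub_eq_sub hu_bdry) hnormal_speed⟩

theorem statement13 :
    ∃ C : ℝ → ℝ, (∀ M, 0 < C M) ∧
      ∀ g : ℝ → ℝ → ℝ, ContDiff ℝ (⊤ : ℕ∞) (fun p : ℝ × ℝ => g p.1 p.2) →
      ∀ M : ℝ, (∀ a b, |g a b| ≤ M) →
      ∀ T : ℝ, 0 < T → ∀ u : ℝ → ℝ → ℝ, IsGraphSol g T u →
      ∀ t ∈ Set.Ioo 0 T, ∃ D : ℝ,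
        HasDerivAt (fun t' => ∫ x in (0:ℝ)..1, Real.sqrt (1 + (pdx u x t') ^ 2) ^ 3) D t ∧
        D ≤ C M + C M * (∫ x in (0:ℝ)..1, Real.sqrt (1 + (pdx u x t) ^ 2) ^ 3) ^ 3 := by
  refine ⟨fun M => 1 + (3 * M ^ 2 + 6 * M ^ 4), fun M => by positivity,
    fun g _ M hg T _ u ⟨hu, hflow, hbdry⟩ t ht => ?_⟩
  obtain ⟨D, hD, hle⟩ := statement13_general zero_lt_one hg (hu.of_le (WithTop.coe_le_coe.2 le_top))
    (fun x hx => hflow x hx t (Ioo_subset_Icc_self ht))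
    (by filter_upwards [Icc_mem_nhds ht.1 ht.2] with s hs using (hbdry s hs).1)
    (hbdry t (Ioo_subset_Icc_self ht)).2
  have hI : 0 ≤ (∫ x in (0:ℝ)..1, √(1 + pdx u x t ^ 2) ^ 3) ^ 3 :=
    pow_nonneg (slopeEnergy_nonneg zero_le_one) 3
  have hC : 0 ≤ 3 * M ^ 2 + 6 * M ^ 4 := by positivity
  exact ⟨D, hD, by linarith⟩
end
end

section
/- Let C > 0, T > 0, and let u : [0,1] × [0,T] → ℝ be a smooth function such that ∫₀^T ∫₀¹ u_t(x,t)² dx dt ≤ C, and for every t ∈ [0,T] both ∫₀¹ u_x(x,t)² dx ≤ C and ∫₀¹ u(x,t)² dx ≤ C. Then there exists C' > 0, depending only on C, such that |u(x,t) − u(y,s)| ≤ C' (|x−y|^{1/2} + |t−s|^{1/4}) for all x, y ∈ [0,1] and t, s ∈ [0,T]. -/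
open Real MeasureTheory

noncomputable section

/-! For fixed times `s`, `t` put `w = u(·,t) - u(·,s)`. Cauchy–Schwarz in time gives
`‖w‖² ≤ C |t - s|` in `L²`, and the energy bounds give `‖w‖² ≤ 4C` and `‖w'‖² ≤ 4C` there. Averaging
`w` over an interval of length `h` around a point gives `h w² ≤ 2 (‖w‖² + h² ‖w'‖²)` at that point,
and the choice `h = min 1 √|t - s|` turns this into `w² ≤ 16 C √|t - s|`. Continuity in space is
Cauchy–Schwarz for `u_x`. -/

section SobolevInequalities

variable {E : Type*} [NormedAddCommGroup E]

theorem sq_norm_sub_le_two_mul (v w : E) : ‖v - w‖ ^ 2 ≤ 2 * (‖v‖ ^ 2 + ‖w‖ ^ 2) :=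
  (pow_le_pow_left₀ (norm_nonneg _) (norm_sub_le v w) 2).trans add_sq_le

theorem integral_sq_norm_sub_le {α : Type*} [MeasurableSpace α] {μ : Measure α} {f g : α → E}
    (hf : Integrable (fun x => ‖f x‖ ^ 2) μ) (hg : Integrable (fun x => ‖g x‖ ^ 2) μ) :
    ∫ x, ‖f x - g x‖ ^ 2 ∂μ ≤ 2 * (∫ x, ‖f x‖ ^ 2 ∂μ + ∫ x, ‖g x‖ ^ 2 ∂μ) := by
  rw [← integral_add hf hg, ← integral_const_mul]
  exact integral_mono_of_nonneg (.of_forall fun x => sq_nonneg _) ((hf.add hg).const_mul 2)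
    (.of_forall fun x => sq_norm_sub_le_two_mul (f x) (g x))

variable [NormedSpace ℝ E] [CompleteSpace E]

theorem sq_norm_integral_le {α : Type*} [MeasurableSpace α] {μ : Measure α} [IsFiniteMeasure μ]
    {f : α → E} (hf : Integrable f μ) (hf_sq : Integrable (fun x => ‖f x‖ ^ 2) μ) :
    ‖∫ x, f x ∂μ‖ ^ 2 ≤ μ.real Set.univ * ∫ x, ‖f x‖ ^ 2 ∂μ := by
  rcases eq_zero_or_neZero μ with rfl | hμ
  · simp
  have hconvex : ConvexOn ℝ Set.univ fun v : E => ‖v‖ ^ 2 :=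
    convexOn_univ_norm.pow (fun _ _ => norm_nonneg _) 2
  have jensen : ‖⨍ x, f x ∂μ‖ ^ 2 ≤ ⨍ x, ‖f x‖ ^ 2 ∂μ :=
    hconvex.map_average_le (by fun_prop) isClosed_univ (by simp) hf hf_sq
  have hμ_pos : 0 < μ.real Set.univ := measureReal_univ_pos
  calc ‖∫ x, f x ∂μ‖ ^ 2 = μ.real Set.univ ^ 2 * ‖⨍ x, f x ∂μ‖ ^ 2 := by
        rw [← measure_smul_average, norm_smul, mul_pow, Real.norm_of_nonneg hμ_pos.le]
    _ ≤ μ.real Set.univ ^ 2 * ⨍ x, ‖f x‖ ^ 2 ∂μ := by gcongr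
    _ = μ.real Set.univ * ∫ x, ‖f x‖ ^ 2 ∂μ := by
        rw [← measure_smul_average μ fun x => ‖f x‖ ^ 2, smul_eq_mul, sq, mul_assoc]

variable {f f' : ℝ → E} {a b : ℝ}

theorem sq_norm_sub_le_mul_integral_sq_norm_deriv (hab : a ≤ b)
    (hf : ∀ x ∈ Set.Icc a b, HasDerivAt f (f' x) x) (hf' : ContinuousOn f' (Set.Icc a b)) :
    ‖f b - f a‖ ^ 2 ≤ (b - a) * ∫ x in a..b, ‖f' x‖ ^ 2 := by
  rw [← Set.uIcc_of_le hab] at hf hf'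
  have hint := hf'.intervalIntegrable (μ := volume)
  have hint_sq := (hf'.norm.pow 2).intervalIntegrable (μ := volume)
  rw [← intervalIntegral.integral_eq_sub_of_hasDerivAt hf hint,
    intervalIntegral.integral_of_le hab, intervalIntegral.integral_of_le hab]
  simpa [hab] using sq_norm_integral_le hint.1 hint_sq.1

theorem sq_norm_sub_le_integral_sq_norm_deriv_mul_abs_sub
    (hf : ∀ x ∈ Set.Icc a b, HasDerivAt f (f' x) x) (hf' : ContinuousOn f' (Set.Icc a b))
    {x y : ℝ} (hx : x ∈ Set.Icc a b) (hy : y ∈ Set.Icc a b) :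
    ‖f x - f y‖ ^ 2 ≤ (∫ z in a..b, ‖f' z‖ ^ 2) * |x - y| := by
  wlog hyx : y ≤ x generalizing x y
  · rw [norm_sub_rev, abs_sub_comm]
    exact this hy hx (le_of_not_ge hyx)
  have hsub : Set.Icc y x ⊆ Set.Icc a b := Set.Icc_subset_Icc hy.1 hx.2
  have hint : IntervalIntegrable (fun z => ‖f' z‖ ^ 2) volume a b :=
    (hf'.norm.pow 2).intervalIntegrable_of_Icc (hy.1.trans hy.2)
  calc ‖f x - f y‖ ^ 2 ≤ (x - y) * ∫ z in y..x, ‖f' z‖ ^ 2 :=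
        sq_norm_sub_le_mul_integral_sq_norm_deriv hyx (fun z hz => hf z (hsub hz)) (hf'.mono hsub)
    _ ≤ (x - y) * ∫ z in a..b, ‖f' z‖ ^ 2 := by
        gcongr
        exact intervalIntegral.integral_mono_interval hy.1 hyx hx.2
          (.of_forall fun z => sq_nonneg _) hint
    _ = (∫ z in a..b, ‖f' z‖ ^ 2) * |x - y| := by rw [abs_of_nonneg (sub_nonneg.2 hyx), mul_comm]

theorem mul_sq_norm_le_integral_sq_norm_add_integral_sq_norm_deriv
    (hf : ∀ x ∈ Set.Icc a b, HasDerivAt f (f' x) x) (hf' : ContinuousOn f' (Set.Icc a b))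
    {h : ℝ} (h_nonneg : 0 ≤ h) (h_le : h ≤ b - a) {x : ℝ} (hx : x ∈ Set.Icc a b) :
    h * ‖f x‖ ^ 2 ≤ 2 * ((∫ y in a..b, ‖f y‖ ^ 2) + h ^ 2 * ∫ y in a..b, ‖f' y‖ ^ 2) := by
  set K := ∫ y in a..b, ‖f' y‖ ^ 2
  have hK : 0 ≤ K := intervalIntegral.integral_nonneg (hx.1.trans hx.2) fun y _ => sq_nonneg _
  obtain ⟨c, hac, hcb, hcx, hxc⟩ : ∃ c, a ≤ c ∧ c + h ≤ b ∧ c ≤ x ∧ x ≤ c + h :=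
    ⟨max a (x - h), le_max_left _ _, by grind, by grind, by grind⟩
  have hpointwise : ∀ y ∈ Set.Icc c (c + h), ‖f x‖ ^ 2 ≤ 2 * (‖f y‖ ^ 2 + K * h) := fun y hy => by
    have hincr : ‖f x - f y‖ ^ 2 ≤ K * h :=
      (sq_norm_sub_le_integral_sq_norm_deriv_mul_abs_sub hf hf' hx
        ⟨hac.trans hy.1, hy.2.trans hcb⟩).trans (by gcongr; grind)
    have htriangle : ‖f x‖ ^ 2 ≤ 2 * (‖f x - f y‖ ^ 2 + ‖f y‖ ^ 2) := by
      simpa using sq_norm_sub_le_two_mul (f x - f y) (-f y)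
    linarith
  have hcont_sq : ContinuousOn (fun y => ‖f y‖ ^ 2) (Set.Icc a b) :=
    (HasDerivAt.continuousOn hf).norm.pow 2
  have hint : IntervalIntegrable (fun y => ‖f y‖ ^ 2) volume c (c + h) :=
    (hcont_sq.mono (Set.Icc_subset_Icc hac hcb)).intervalIntegrable_of_Icc (by linarith)
  calc h * ‖f x‖ ^ 2 = ∫ _ in c..(c + h), ‖f x‖ ^ 2 := by simp
    _ ≤ ∫ y in c..(c + h), 2 * (‖f y‖ ^ 2 + K * h) :=
        intervalIntegral.integral_mono_on (by linarith) intervalIntegrable_const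
          ((hint.add intervalIntegrable_const).const_mul 2) hpointwise
    _ = 2 * ((∫ y in c..(c + h), ‖f y‖ ^ 2) + h ^ 2 * K) := by
        rw [intervalIntegral.integral_const_mul,
          intervalIntegral.integral_add hint intervalIntegrable_const,
          intervalIntegral.integral_const, smul_eq_mul]
        ring
    _ ≤ 2 * ((∫ y in a..b, ‖f y‖ ^ 2) + h ^ 2 * K) := by
        gcongr
        exact intervalIntegral.integral_mono_interval hac (by linarith) hcb
          (.of_forall fun y => sq_nonneg _)
          (hcont_sq.intervalIntegrable_of_Icc (hx.1.trans hx.2))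

theorem sq_norm_le_four_mul_of_integral_sq_norm_le
    (hf : ∀ x ∈ Set.Icc a b, HasDerivAt f (f' x) x) (hf' : ContinuousOn f' (Set.Icc a b))
    {M h : ℝ} (h_pos : 0 < h) (h_le : h ≤ b - a) (hfM : ∫ y in a..b, ‖f y‖ ^ 2 ≤ M * h ^ 2)
    (hfM' : ∫ y in a..b, ‖f' y‖ ^ 2 ≤ M) {x : ℝ} (hx : x ∈ Set.Icc a b) :
    ‖f x‖ ^ 2 ≤ 4 * M * h := by
  refine le_of_mul_le_mul_left ?_ h_pos
  calc h * ‖f x‖ ^ 2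
      ≤ 2 * ((∫ y in a..b, ‖f y‖ ^ 2) + h ^ 2 * ∫ y in a..b, ‖f' y‖ ^ 2) :=
        mul_sq_norm_le_integral_sq_norm_add_integral_sq_norm_deriv hf hf' h_pos.le h_le hx
    _ ≤ 2 * (M * h ^ 2 + h ^ 2 * M) := by gcongr
    _ = h * (4 * M * h) := by ring

theorem integral_sq_norm_sub_le_mul_integral_integral {u v : ℝ → ℝ → E} {s t : ℝ}
    (hab : a ≤ b) (hst : s ≤ t) (hu : ∀ x τ, HasDerivAt (u x) (v x τ) τ)
    (hv : Continuous (Function.uncurry v)) :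
    ∫ x in a..b, ‖u x t - u x s‖ ^ 2 ≤ (t - s) * ∫ τ in s..t, ∫ x in a..b, ‖v x τ‖ ^ 2 := by
  have hv_sq : Continuous (Function.uncurry fun x τ => ‖v x τ‖ ^ 2) := hv.norm.pow 2
  have hint : IntervalIntegrable (fun x => ∫ τ in s..t, ‖v x τ‖ ^ 2) volume a b :=
    (intervalIntegral.continuous_parametric_intervalIntegral_of_continuous' hv_sq s t)
      |>.intervalIntegrable a b
  calc ∫ x in a..b, ‖u x t - u x s‖ ^ 2
      ≤ ∫ x in a..b, (t - s) * ∫ τ in s..t, ‖v x τ‖ ^ 2 := by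
        rw [intervalIntegral.integral_of_le hab, intervalIntegral.integral_of_le hab]
        exact integral_mono_of_nonneg (.of_forall fun x => sq_nonneg _) (hint.const_mul _).1
          (.of_forall fun x => sq_norm_sub_le_mul_integral_sq_norm_deriv hst
            (fun τ _ => hu x τ) (hv.uncurry_left x).continuousOn)
    _ = (t - s) * ∫ τ in s..t, ∫ x in a..b, ‖v x τ‖ ^ 2 := by
        rw [intervalIntegral.integral_const_mul, intervalIntegral_intervalIntegral_swap]
        exact (hv_sq.continuousOn.integrableOn_compact
          (isCompact_uIcc.prod isCompact_uIcc)).mono_set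
            (Set.prod_mono Set.uIoc_subset_uIcc Set.uIoc_subset_uIcc)

end SobolevInequalities

section PartialDerivatives

variable {u : ℝ → ℝ → ℝ}

theorem hasDerivAt_pdx {x t : ℝ} (hu : DifferentiableAt ℝ (fun p : ℝ × ℝ => u p.1 p.2) (x, t)) :
    HasDerivAt (fun x' => u x' t) (pdx u x t) x :=
  (hu.comp x (f := fun x' : ℝ => (x', t)) (by fun_prop)).hasDerivAt

theorem hasDerivAt_pdt {x t : ℝ} (hu : DifferentiableAt ℝ (fun p : ℝ × ℝ => u p.1 p.2) (x, t)) :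
    HasDerivAt (u x) (pdt u x t) t :=
  (hu.comp t (f := fun t' : ℝ => (x, t')) (by fun_prop)).hasDerivAt

theorem continuous_pdx (hu : ContDiff ℝ 1 fun p : ℝ × ℝ => u p.1 p.2) :
    Continuous fun p : ℝ × ℝ => pdx u p.1 p.2 := by
  have hpdx : (fun p : ℝ × ℝ => pdx u p.1 p.2)
      = fun p => fderiv ℝ (fun p : ℝ × ℝ => u p.1 p.2) p (1, 0) := by
    ext ⟨x, t⟩
    exact ((hu.differentiable one_ne_zero (x, t)).hasFDerivAt.comp_hasDerivAt x
      ((hasDerivAt_id x).prodMk (hasDerivAt_const x t))).deriv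
  rw [hpdx]
  exact (hu.continuous_fderiv one_ne_zero).clm_apply continuous_const

theorem continuous_pdt (hu : ContDiff ℝ 1 fun p : ℝ × ℝ => u p.1 p.2) :
    Continuous fun p : ℝ × ℝ => pdt u p.1 p.2 :=
  (continuous_pdx (u := fun t x => u x t) (hu.comp (contDiff_snd.prodMk contDiff_fst))).comp
    continuous_swap

end PartialDerivatives

section HolderEstimates

variable {C T : ℝ} {u : ℝ → ℝ → ℝ}

theorem sq_sub_le_mul_abs_sub_space (hu : ContDiff ℝ 1 fun p : ℝ × ℝ => u p.1 p.2) {t : ℝ}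
    (hux : ∫ x in (0 : ℝ)..1, pdx u x t ^ 2 ≤ C) {x y : ℝ} (hx : x ∈ Set.Icc (0 : ℝ) 1)
    (hy : y ∈ Set.Icc (0 : ℝ) 1) : (u x t - u y t) ^ 2 ≤ C * |x - y| := by
  have hincr : (u x t - u y t) ^ 2 ≤ (∫ z in (0 : ℝ)..1, pdx u z t ^ 2) * |x - y| := by
    simpa only [Real.norm_eq_abs, sq_abs] using sq_norm_sub_le_integral_sq_norm_deriv_mul_abs_sub
      (fun z _ => hasDerivAt_pdx (hu.differentiable one_ne_zero (z, t)))
      ((continuous_pdx hu).comp (.prodMk_left t)).continuousOn hx hy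
  exact hincr.trans (by gcongr)

theorem integral_sq_sub_le_mul_sub_time (hu : ContDiff ℝ 1 fun p : ℝ × ℝ => u p.1 p.2)
    (hut : ∫ t in (0 : ℝ)..T, ∫ x in (0 : ℝ)..1, pdt u x t ^ 2 ≤ C) {s t : ℝ} (hs : 0 ≤ s)
    (hst : s ≤ t) (ht : t ≤ T) : ∫ x in (0 : ℝ)..1, (u x t - u x s) ^ 2 ≤ C * (t - s) := by
  have hut_sq : Continuous (Function.uncurry fun τ x => pdt u x τ ^ 2) :=
    ((continuous_pdt hu).comp continuous_swap).pow 2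
  have hut_cont : Continuous fun τ => ∫ x in (0 : ℝ)..1, pdt u x τ ^ 2 :=
    intervalIntegral.continuous_parametric_intervalIntegral_of_continuous' hut_sq 0 1
  calc ∫ x in (0 : ℝ)..1, (u x t - u x s) ^ 2
      ≤ (t - s) * ∫ τ in s..t, ∫ x in (0 : ℝ)..1, pdt u x τ ^ 2 := by
        simpa only [Real.norm_eq_abs, sq_abs] using
          integral_sq_norm_sub_le_mul_integral_integral zero_le_one hst
            (fun x τ => hasDerivAt_pdt (hu.differentiable one_ne_zero (x, τ))) (continuous_pdt hu)
    _ ≤ (t - s) * ∫ τ in (0 : ℝ)..T, ∫ x in (0 : ℝ)..1, pdt u x τ ^ 2 := by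
        gcongr
        exact intervalIntegral.integral_mono_interval hs hst ht
          (.of_forall fun τ => intervalIntegral.integral_nonneg zero_le_one fun x _ => sq_nonneg _)
          (hut_cont.intervalIntegrable 0 T)
    _ ≤ C * (t - s) := by
        rw [mul_comm]
        gcongr

theorem integral_sq_sub_le_four_mul {f g : ℝ → ℝ} (hf : Continuous f) (hg : Continuous g)
    (hfC : ∫ x in (0 : ℝ)..1, f x ^ 2 ≤ C) (hgC : ∫ x in (0 : ℝ)..1, g x ^ 2 ≤ C) :
    ∫ x in (0 : ℝ)..1, (f x - g x) ^ 2 ≤ 4 * C := by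
  have hsub : ∫ x in (0 : ℝ)..1, (f x - g x) ^ 2
      ≤ 2 * ((∫ x in (0 : ℝ)..1, f x ^ 2) + ∫ x in (0 : ℝ)..1, g x ^ 2) := by
    simpa only [intervalIntegral.integral_of_le zero_le_one, Real.norm_eq_abs, sq_abs] using
      integral_sq_norm_sub_le ((hf.norm.pow 2).intervalIntegrable 0 1).1
        ((hg.norm.pow 2).intervalIntegrable 0 1).1
  linarith

theorem integral_sq_sub_le_four_mul_min (hu : ContDiff ℝ 1 fun p : ℝ × ℝ => u p.1 p.2)
    (hut : ∫ t in (0 : ℝ)..T, ∫ x in (0 : ℝ)..1, pdt u x t ^ 2 ≤ C)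
    (hu_sq : ∀ t ∈ Set.Icc 0 T, ∫ x in (0 : ℝ)..1, u x t ^ 2 ≤ C)
    {s t : ℝ} (hs : s ∈ Set.Icc 0 T) (ht : t ∈ Set.Icc 0 T) (hst : s ≤ t) :
    ∫ x in (0 : ℝ)..1, (u x t - u x s) ^ 2 ≤ 4 * C * min 1 √(t - s) ^ 2 := by
  have hst_nonneg : 0 ≤ t - s := sub_nonneg.2 hst
  rcases min_choice 1 √(t - s) with hmin | hmin <;> rw [hmin]
  · have hu_cont (τ : ℝ) : Continuous (u · τ) := hu.continuous.comp (.prodMk_left τ)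
    rw [one_pow, mul_one]
    exact integral_sq_sub_le_four_mul (hu_cont t) (hu_cont s) (hu_sq t ht) (hu_sq s hs)
  · have hC : 0 ≤ C :=
      (intervalIntegral.integral_nonneg zero_le_one fun y _ => sq_nonneg _).trans (hu_sq t ht)
    rw [Real.sq_sqrt hst_nonneg]
    exact (integral_sq_sub_le_mul_sub_time hu hut hs.1 hst ht.2).trans (by gcongr; linarith)

theorem sq_sub_le_mul_sqrt_abs_sub_time (hu : ContDiff ℝ 1 fun p : ℝ × ℝ => u p.1 p.2)
    (hut : ∫ t in (0 : ℝ)..T, ∫ x in (0 : ℝ)..1, pdt u x t ^ 2 ≤ C)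
    (hux : ∀ t ∈ Set.Icc 0 T, ∫ x in (0 : ℝ)..1, pdx u x t ^ 2 ≤ C)
    (hu_sq : ∀ t ∈ Set.Icc 0 T, ∫ x in (0 : ℝ)..1, u x t ^ 2 ≤ C)
    {x s t : ℝ} (hx : x ∈ Set.Icc (0 : ℝ) 1) (hs : s ∈ Set.Icc 0 T) (ht : t ∈ Set.Icc 0 T) :
    (u x t - u x s) ^ 2 ≤ 16 * C * √|t - s| := by
  wlog hst : s ≤ t generalizing s t
  · rw [sub_sq_comm, abs_sub_comm]
    exact this ht hs (le_of_not_ge hst)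
  rcases hst.eq_or_lt with rfl | hst_lt
  · simp
  rw [abs_of_nonneg (sub_nonneg.2 hst)]
  have hC : 0 ≤ C :=
    (intervalIntegral.integral_nonneg zero_le_one fun y _ => sq_nonneg _).trans (hu_sq t ht)
  have hux_cont (τ : ℝ) : Continuous (pdx u · τ) := (continuous_pdx hu).comp (.prodMk_left τ)
  have hderiv (y τ : ℝ) : HasDerivAt (u · τ) (pdx u y τ) y :=
    hasDerivAt_pdx (hu.differentiable one_ne_zero (y, τ))
  have hw := integral_sq_sub_le_four_mul_min hu hut hu_sq hs ht hst
  have hw' : ∫ y in (0 : ℝ)..1, (pdx u y t - pdx u y s) ^ 2 ≤ 4 * C :=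
    integral_sq_sub_le_four_mul (hux_cont t) (hux_cont s) (hux t ht) (hux s hs)
  have hw_sq : ‖u x t - u x s‖ ^ 2 ≤ 4 * (4 * C) * min 1 √(t - s) :=
    sq_norm_le_four_mul_of_integral_sq_norm_le
      (fun y _ => (hderiv y t).fun_sub (hderiv y s)) ((hux_cont t).sub (hux_cont s)).continuousOn
      (lt_min one_pos (Real.sqrt_pos.2 (sub_pos.2 hst_lt))) (by simp)
      (by simpa only [Real.norm_eq_abs, sq_abs] using hw)
      (by simpa only [Real.norm_eq_abs, sq_abs] using hw') hx
  calc (u x t - u x s) ^ 2 ≤ 4 * (4 * C) * min 1 √(t - s) := by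
        simpa only [Real.norm_eq_abs, sq_abs] using hw_sq
    _ ≤ 4 * (4 * C) * √(t - s) := by gcongr; exact min_le_right _ _
    _ = 16 * C * √(t - s) := by ring

theorem statement15_general (hu : ContDiff ℝ 1 fun p : ℝ × ℝ => u p.1 p.2)
    (hut : ∫ t in (0 : ℝ)..T, ∫ x in (0 : ℝ)..1, pdt u x t ^ 2 ≤ C)
    (hux : ∀ t ∈ Set.Icc 0 T, ∫ x in (0 : ℝ)..1, pdx u x t ^ 2 ≤ C)
    (hu_sq : ∀ t ∈ Set.Icc 0 T, ∫ x in (0 : ℝ)..1, u x t ^ 2 ≤ C)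
    {x y s t : ℝ} (hx : x ∈ Set.Icc (0 : ℝ) 1) (hy : y ∈ Set.Icc (0 : ℝ) 1)
    (ht : t ∈ Set.Icc 0 T) (hs : s ∈ Set.Icc 0 T) :
    |u x t - u y s| ≤ 4 * √C * (|x - y| ^ (1 / 2 : ℝ) + |t - s| ^ (1 / 4 : ℝ)) := by
  have hspace : |u x t - u y t| ≤ √C * |x - y| ^ (1 / 2 : ℝ) := by
    rw [← Real.sqrt_eq_rpow, ← Real.sqrt_mul' _ (abs_nonneg _)]
    exact Real.abs_le_sqrt (sq_sub_le_mul_abs_sub_space hu (hux t ht) hx hy)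
  have htime : |u y t - u y s| ≤ 4 * √C * |t - s| ^ (1 / 4 : ℝ) := by
    have hroot : √(16 * C * √|t - s|) = 4 * √C * |t - s| ^ (1 / 4 : ℝ) := by
      rw [Real.sqrt_mul' _ (Real.sqrt_nonneg _), Real.sqrt_mul (by norm_num),
        show (16 : ℝ) = 4 ^ 2 by norm_num, Real.sqrt_sq (by norm_num), Real.sqrt_eq_rpow |t - s|,
        Real.sqrt_eq_rpow (_ ^ _), ← Real.rpow_mul (abs_nonneg _)]
      norm_num
    exact hroot ▸ Real.abs_le_sqrt (sq_sub_le_mul_sqrt_abs_sub_time hu hut hux hu_sq hy hs ht)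
  calc |u x t - u y s| ≤ |u x t - u y t| + |u y t - u y s| := abs_sub_le _ _ _
    _ ≤ √C * |x - y| ^ (1 / 2 : ℝ) + 4 * √C * |t - s| ^ (1 / 4 : ℝ) := add_le_add hspace htime
    _ ≤ 4 * √C * (|x - y| ^ (1 / 2 : ℝ) + |t - s| ^ (1 / 4 : ℝ)) := by
        have : 0 ≤ √C * |x - y| ^ (1 / 2 : ℝ) := by positivity
        linarith

end HolderEstimates

theorem statement15 (C : ℝ) (hC : 0 < C) :
    ∃ C' > (0:ℝ), ∀ T : ℝ, 0 < T → ∀ u : ℝ → ℝ → ℝ,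
      ContDiff ℝ (⊤ : ℕ∞) (fun p : ℝ × ℝ => u p.1 p.2) →
      (∫ t in (0:ℝ)..T, ∫ x in (0:ℝ)..1, (pdt u x t) ^ 2) ≤ C →
      (∀ t ∈ Set.Icc (0:ℝ) T,
        (∫ x in (0:ℝ)..1, (pdx u x t) ^ 2) ≤ C ∧ (∫ x in (0:ℝ)..1, (u x t) ^ 2) ≤ C) →
      ∀ x ∈ Set.Icc (0:ℝ) 1, ∀ y ∈ Set.Icc (0:ℝ) 1,
        ∀ t ∈ Set.Icc (0:ℝ) T, ∀ s ∈ Set.Icc (0:ℝ) T,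
          |u x t - u y s| ≤ C' * (|x - y| ^ ((1:ℝ)/2) + |t - s| ^ ((1:ℝ)/4)) := by
  exact ⟨4 * √C, by positivity, fun T _ u hu hut hb x hx y hy t ht s hs =>
    statement15_general (hu.of_le (by simp)) hut (fun τ hτ => (hb τ hτ).1) (fun τ hτ => (hb τ hτ).2)
      hx hy ht hs⟩
end
end
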